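/- Fix an integer d ≥ 1, δ ∈ (0,1), z ∈ [0, μ^{−1}), and x ∈ ℤ^d, and let p = z·2d/((1−δ)√π) ∈ [0,∞). Suppose ρ = ρ(g) is chosen so that g^{−1/2} e^{α(g,ρ(g))²} → p as g → ∞, where α(g,ρ) = (ρ−1)/(2√g), and additionally α(g,ρ(g)) → +∞ if p > 0. Then the continuous-time weakly self-avoiding walk two-point function converges to p√π times the strictly self-avoiding walk two-point function: lim_{g→∞} Σ_{n=0}^∞ w_n(g,ρ(g); x) = p √π · G_z(x), where G_z(x) = Σ_{n=0}^∞ c_n(x) z^n. (In particular, if p = 0 the limit is 0.) -/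

import Mathlib

/-!
Formalization of statements from "The strong interaction limit of
continuous-time weakly self-avoiding walk" by Brydges, Dahlqvist, Slade.

An `n`-step nearest-neighbour walk on `ℤ^d` starting at the origin is encoded
bijectively by its sequence of steps `s : Fin n → Fin d × Bool`, a step being a
coordinate direction together with a sign.
-/

open scoped BigOperators Topology
open Filter

namespace StrongInteraction

/-- The unit step in coordinate direction `e.1`, with sign `e.2`. -/
def stepVec (d : ℕ) (e : Fin d × Bool) : Fin d → ℤ :=
  fun i => if i = e.1 then (if e.2 then 1 else -1) else 0

/-- `walkPos s k` is the position `Y_k` of the walk started at the origin whose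
successive nearest-neighbour steps are given by `s`. -/
def walkPos {d n : ℕ} (s : Fin n → Fin d × Bool) (k : Fin (n + 1)) : Fin d → ℤ :=
  ∑ i ∈ Finset.univ.filter (fun i : Fin n => (i : ℕ) < (k : ℕ)), stepVec d (s i)

/-- `n_x(Y)`: the number of visits to `x` by the walk. -/
def visits {d n : ℕ} (s : Fin n → Fin d × Bool) (x : Fin d → ℤ) : ℕ :=
  (Finset.univ.filter (fun k : Fin (n + 1) => walkPos s k = x)).card

/-- The set of distinct vertices visited by the walk. -/
def walkRange {d n : ℕ} (s : Fin n → Fin d × Bool) : Finset (Fin d → ℤ) :=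
  Finset.image (walkPos s) Finset.univ

/-- A walk is self-avoiding when its positions are pairwise distinct. -/
def SelfAvoiding {d n : ℕ} (s : Fin n → Fin d × Bool) : Prop :=
  Function.Injective (walkPos s)

instance {d n : ℕ} (s : Fin n → Fin d × Bool) : Decidable (SelfAvoiding s) :=
  inferInstanceAs (Decidable (Function.Injective (walkPos s)))

/-- `c_n`: the number of `n`-step self-avoiding walks. -/
def csaw (d n : ℕ) : ℕ :=
  (Finset.univ.filter fun s : Fin n → Fin d × Bool => SelfAvoiding s).card


/-- `F_{g,ρ}(m) = ∫_0^∞ (s^{m-1}/(m-1)!) e^{-s - g s² + ρ s} ds`, the contribution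
of a vertex visited `m` times, obtained from the Gamma(m,1) density of the sum of
`m` independent Exp(1) holding times. -/
noncomputable def F (g ρ : ℝ) (m : ℕ) : ℝ :=
  ∫ t in Set.Ioi (0 : ℝ),
    (t ^ (m - 1) / (Nat.factorial (m - 1))) * Real.exp (-t - g * t ^ 2 + ρ * t)

/-- `c_n(x)`: the number of `n`-step self-avoiding walks ending at `x`. -/
def csawAt (d n : ℕ) (x : Fin d → ℤ) : ℕ :=
  (Finset.univ.filter fun s : Fin n → Fin d × Bool =>
    SelfAvoiding s ∧ walkPos s (Fin.last n) = x).card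

/-- `w_n(g,ρ;x)`: the continuous-time weakly self-avoiding walk weight of
`n`-step walks ending at `x`, for killing rate `δ`, expressed via the
Gamma-integral formula for the expectation over the exponential holding times. -/
noncomputable def wAt (d : ℕ) (δ : ℝ) (n : ℕ) (g ρ : ℝ) (x : Fin d → ℤ) : ℝ :=
  ((1 - δ) / (2 * d)) ^ n *
    ∑ s ∈ Finset.univ.filter (fun s : Fin n → Fin d × Bool => walkPos s (Fin.last n) = x),
      ∏ v ∈ walkRange s, F g ρ (visits s v)

/-!
In the strong interaction limit a vertex visited once has weight `F g ρ 1 → p √π`, while a vertex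
visited `m` times has a weight at most of order `η ^ (m - 1)` for every `η > 0`; so each `w_n`
converges to the contribution of the self-avoiding walks. To exchange this limit with the sum over
`n`, the weights are dominated by those of a discrete walk which pays a factor `ε` for every return
to a visited vertex. The resulting partition function is submultiplicative in `n`, and for each
fixed `n` it is a polynomial in `ε` with value `c_n` at `ε = 0`. Hence one `N` with `c_N z ^ N < 1`
makes the dominating series converge for some `ε > 0` at some point beyond `z`.
-/

section OneVertex

/-! ### The weight of a single vertex -/

/-- The paper's parameter `α(g,ρ) = (ρ - 1) / (2√g)`: up to the factor `√g`, the location of the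
maximum of the Gaussian density obtained by completing the square in the exponent of `F g ρ`. -/
noncomputable def alpha (g ρ : ℝ) : ℝ := (ρ - 1) / (2 * √g)

/-- The factor `g^{-1/2} e^{α(g,ρ)²}` which completing the square extracts from `F g ρ 1`, and whose
limit is prescribed in the strong interaction limit. -/
noncomputable def gaussFactor (g ρ : ℝ) : ℝ := g ^ (-(1 : ℝ) / 2) * Real.exp (alpha g ρ ^ 2)

lemma gaussFactor_eq {g : ℝ} (hg : 0 ≤ g) (ρ : ℝ) :
    gaussFactor g ρ = (√g)⁻¹ * Real.exp (alpha g ρ ^ 2) := by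
  rw [gaussFactor, neg_div, Real.rpow_neg hg, Real.sqrt_eq_rpow]

lemma gaussFactor_nonneg {g : ℝ} (hg : 0 ≤ g) (ρ : ℝ) : 0 ≤ gaussFactor g ρ := by
  rw [gaussFactor]
  positivity

lemma integral_exp_neg_sq : ∫ u : ℝ, Real.exp (-u ^ 2) = √Real.pi := by
  simpa using integral_gaussian 1

lemma integrable_exp_neg_sq : MeasureTheory.Integrable fun u : ℝ => Real.exp (-u ^ 2) := by
  simpa using integrable_exp_neg_mul_sq one_pos

lemma exp_quadratic_eq {g : ℝ} (hg : 0 < g) (ρ t : ℝ) :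
    Real.exp (-t - g * t ^ 2 + ρ * t) =
      Real.exp (alpha g ρ ^ 2) * Real.exp (-(√g * t - alpha g ρ) ^ 2) := by
  have hs : √g ≠ 0 := (Real.sqrt_pos.2 hg).ne'
  have hlin : 2 * √g * alpha g ρ = ρ - 1 := by
    rw [alpha]
    field_simp
  rw [← Real.exp_add]
  congr 1
  linear_combination t ^ 2 * Real.sq_sqrt hg.le - t * hlin

lemma integrable_exp_quadratic {g : ℝ} (hg : 0 < g) (ρ : ℝ) :
    MeasureTheory.Integrable fun t : ℝ => Real.exp (-t - g * t ^ 2 + ρ * t) := by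
  simp_rw [exp_quadratic_eq hg]
  exact ((integrable_exp_neg_sq.comp_sub_right _).comp_mul_left'
    (Real.sqrt_pos.2 hg).ne').const_mul _

lemma setIntegral_Ioi_comp_sub_right {E : Type*} [NormedAddCommGroup E] [NormedSpace ℝ E]
    (f : ℝ → E) (a b : ℝ) :
    ∫ t in Set.Ioi b, f (t - a) = ∫ u in Set.Ioi (b - a), f u := by
  simpa using (MeasureTheory.measurePreserving_sub_right MeasureTheory.volume
    a).setIntegral_preimage_emb (measurableEmbedding_subRight a) f (Set.Ioi (b - a))

lemma F_nonneg (g ρ : ℝ) (m : ℕ) : 0 ≤ F g ρ m := by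
  refine MeasureTheory.setIntegral_nonneg measurableSet_Ioi fun t ht => ?_
  have : (0 : ℝ) < t := ht
  positivity

lemma F_one (g ρ : ℝ) :
    F g ρ 1 = ∫ t in Set.Ioi (0 : ℝ), Real.exp (-t - g * t ^ 2 + ρ * t) := by
  simp [F]

lemma F_one_eq_gaussFactor_mul {g : ℝ} (hg : 0 < g) (ρ : ℝ) :
    F g ρ 1 = gaussFactor g ρ * ∫ u in Set.Ioi (-alpha g ρ), Real.exp (-u ^ 2) := by
  have hscale := MeasureTheory.integral_comp_mul_left_Ioi
    (fun u => Real.exp (-(u - alpha g ρ) ^ 2)) 0 (Real.sqrt_pos.2 hg)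
  have hshift := setIntegral_Ioi_comp_sub_right (fun u => Real.exp (-u ^ 2)) (alpha g ρ) 0
  rw [F_one]
  simp_rw [exp_quadratic_eq hg]
  rw [MeasureTheory.integral_const_mul, hscale, mul_zero, hshift, zero_sub, smul_eq_mul,
    gaussFactor_eq hg.le]
  ring

lemma F_one_le {g : ℝ} (hg : 0 < g) (ρ : ℝ) : F g ρ 1 ≤ gaussFactor g ρ * √Real.pi := by
  rw [F_one_eq_gaussFactor_mul hg, ← integral_exp_neg_sq]
  exact mul_le_mul_of_nonneg_left (MeasureTheory.setIntegral_le_integral integrable_exp_neg_sq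
    (Eventually.of_forall fun u => (Real.exp_pos _).le)) (gaussFactor_nonneg hg.le ρ)

-- The power of the local time is absorbed into the exponential: `(κ t)^k / k! ≤ e^{κ t}`.
lemma F_le_mul_F_one {g κ : ℝ} (hg : 0 < g) (hκ : 0 < κ) (ρ : ℝ) (m : ℕ) :
    F g ρ m ≤ κ⁻¹ ^ (m - 1) * F g (ρ + κ) 1 := by
  rw [F_one, ← MeasureTheory.integral_const_mul, F]
  have hpow {t : ℝ} (ht : 0 < t) :
      t ^ (m - 1) / (m - 1).factorial ≤ κ⁻¹ ^ (m - 1) * Real.exp (κ * t) :=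
    calc t ^ (m - 1) / (m - 1).factorial
        = κ⁻¹ ^ (m - 1) * ((κ * t) ^ (m - 1) / (m - 1).factorial) := by
          rw [mul_pow, inv_pow]
          field_simp
      _ ≤ κ⁻¹ ^ (m - 1) * Real.exp (κ * t) := by
          gcongr
          exact Real.pow_div_factorial_le_exp _ (by positivity) _
  refine MeasureTheory.integral_mono_of_nonneg ?_
    ((integrable_exp_quadratic hg _).const_mul _).integrableOn ?_
  · filter_upwards [MeasureTheory.ae_restrict_mem measurableSet_Ioi] with t (ht : 0 < t)
    simp only [Pi.zero_apply]
    positivity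
  · filter_upwards [MeasureTheory.ae_restrict_mem measurableSet_Ioi] with t (ht : 0 < t)
    calc t ^ (m - 1) / (m - 1).factorial * Real.exp (-t - g * t ^ 2 + ρ * t)
        ≤ κ⁻¹ ^ (m - 1) * Real.exp (κ * t) * Real.exp (-t - g * t ^ 2 + ρ * t) := by
          gcongr
          exact hpow ht
      _ = κ⁻¹ ^ (m - 1) * Real.exp (-t - g * t ^ 2 + (ρ + κ) * t) := by
          rw [mul_assoc, ← Real.exp_add]
          ring_nf

lemma gaussFactor_add (g ρ κ : ℝ) :
    gaussFactor g (ρ + κ) =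
      gaussFactor g ρ * Real.exp (κ * (alpha g ρ / √g) + (κ / 2 * (√g)⁻¹) ^ 2) := by
  have hsq : alpha g (ρ + κ) ^ 2 =
      alpha g ρ ^ 2 + (κ * (alpha g ρ / √g) + (κ / 2 * (√g)⁻¹) ^ 2) := by
    simp only [alpha]
    ring
  rw [gaussFactor, gaussFactor, hsq, Real.exp_add, mul_assoc]

section Limits

variable {ι : Type*} {l : Filter ι} {g ρ : ι → ℝ} {p : ℝ}

lemma tendsto_inv_sqrt (hg : Tendsto g l atTop) : Tendsto (fun i => (√(g i))⁻¹) l (𝓝 0) :=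
  tendsto_inv_atTop_zero.comp (Real.tendsto_sqrt_atTop.comp hg)

lemma tendsto_alpha_div_sqrt (hg : Tendsto g l atTop)
    (hp : Tendsto (fun i => gaussFactor (g i) (ρ i)) l (𝓝 p)) :
    Tendsto (fun i => alpha (g i) (ρ i) / √(g i)) l (𝓝 0) := by
  have hsq : Tendsto (fun i => (alpha (g i) (ρ i) / √(g i)) ^ 2) l (𝓝 0) := by
    refine squeeze_zero' (Eventually.of_forall fun i => sq_nonneg _) ?_
      (by simpa only [zero_mul] using (tendsto_inv_sqrt hg).mul hp)
    filter_upwards [hg.eventually_ge_atTop 0] with i hi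
    calc (alpha (g i) (ρ i) / √(g i)) ^ 2
        = (√(g i))⁻¹ * ((√(g i))⁻¹ * alpha (g i) (ρ i) ^ 2) := by ring
      _ ≤ (√(g i))⁻¹ * gaussFactor (g i) (ρ i) := by
          rw [gaussFactor_eq hi]
          gcongr
          linarith [Real.add_one_le_exp (alpha (g i) (ρ i) ^ 2)]
  rw [tendsto_zero_iff_abs_tendsto_zero]
  simpa only [Function.comp_def, Real.sqrt_sq_eq_abs, Real.sqrt_zero] using hsq.sqrt

lemma tendsto_gaussFactor_add_const (hg : Tendsto g l atTop)
    (hp : Tendsto (fun i => gaussFactor (g i) (ρ i)) l (𝓝 p)) (κ : ℝ) :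
    Tendsto (fun i => gaussFactor (g i) (ρ i + κ)) l (𝓝 p) := by
  have hexponent := ((tendsto_alpha_div_sqrt hg hp).const_mul κ).add
    (((tendsto_inv_sqrt hg).const_mul (κ / 2)).pow 2)
  have hmul := hp.mul hexponent.rexp
  simpa [gaussFactor_add] using hmul

lemma tendsto_setIntegral_Ioi_exp_neg_sq :
    Tendsto (fun a : ℝ => ∫ u in Set.Ioi (-a), Real.exp (-u ^ 2)) atTop (𝓝 √Real.pi) := by
  rw [← integral_exp_neg_sq]
  exact (MeasureTheory.aecover_Ioi tendsto_neg_atTop_atBot).integral_tendsto_of_countably_generated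
    integrable_exp_neg_sq

lemma tendsto_F_one (hg : Tendsto g l atTop)
    (hp : Tendsto (fun i => gaussFactor (g i) (ρ i)) l (𝓝 p)) (hp0 : 0 ≤ p)
    (hα : 0 < p → Tendsto (fun i => alpha (g i) (ρ i)) l atTop) :
    Tendsto (fun i => F (g i) (ρ i) 1) l (𝓝 (p * √Real.pi)) := by
  rcases hp0.eq_or_lt with rfl | hp0
  · have hbound := hp.mul_const √Real.pi
    rw [zero_mul] at hbound ⊢
    refine squeeze_zero' (Eventually.of_forall fun i => F_nonneg _ _ _) ?_ hbound
    filter_upwards [hg.eventually_gt_atTop 0] with i hi using F_one_le hi _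
  · refine (hp.mul (tendsto_setIntegral_Ioi_exp_neg_sq.comp (hα hp0))).congr' ?_
    filter_upwards [hg.eventually_gt_atTop 0] with i hi
    exact (F_one_eq_gaussFactor_mul hi _).symm

lemma eventually_F_le (hg : Tendsto g l atTop)
    (hp : Tendsto (fun i => gaussFactor (g i) (ρ i)) l (𝓝 p))
    {A η : ℝ} (hA : p * √Real.pi < A) (hη : 0 < η) :
    ∀ᶠ i in l, ∀ m, F (g i) (ρ i) m ≤ A * η ^ (m - 1) := by
  have hshift := (tendsto_gaussFactor_add_const hg hp η⁻¹).mul_const √Real.pi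
  filter_upwards [hg.eventually_gt_atTop 0, hshift.eventually_lt_const hA] with i hi hlt m
  calc F (g i) (ρ i) m
      ≤ η⁻¹⁻¹ ^ (m - 1) * F (g i) (ρ i + η⁻¹) 1 := F_le_mul_F_one hi (inv_pos.2 hη) _ m
    _ ≤ η⁻¹⁻¹ ^ (m - 1) * A := by
        gcongr
        exact (F_one_le hi _).trans hlt.le
    _ = A * η ^ (m - 1) := by rw [inv_inv, mul_comm]

lemma tendsto_F_of_two_le (hg : Tendsto g l atTop)
    (hp : Tendsto (fun i => gaussFactor (g i) (ρ i)) l (𝓝 p)) {m : ℕ} (hm : 2 ≤ m) :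
    Tendsto (fun i => F (g i) (ρ i) m) l (𝓝 0) := by
  refine tendsto_order.2 ⟨fun a ha => Eventually.of_forall fun i => ha.trans_le (F_nonneg _ _ _),
    fun a ha => ?_⟩
  obtain ⟨A, hA⟩ := exists_gt (p * √Real.pi)
  have hsmall : Tendsto (fun η : ℝ => A * η ^ (m - 1)) (𝓝[>] 0) (𝓝 0) := by
    have hcont : Continuous fun η : ℝ => A * η ^ (m - 1) := by fun_prop
    exact (hcont.tendsto' 0 0 (by simp [show m - 1 ≠ 0 by lia])).mono_left nhdsWithin_le_nhds
  obtain ⟨η, hlt, hη⟩ := ((hsmall.eventually_lt_const ha).and self_mem_nhdsWithin).exists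
  filter_upwards [eventually_F_le hg hp hA hη] with i hi using (hi m).trans_lt hlt

end Limits

end OneVertex

section Returns

/-! ### Returns to visited vertices -/

variable {d n m : ℕ}

lemma walkPos_zero (s : Fin n → Fin d × Bool) : walkPos s 0 = 0 := by
  simp [walkPos]

lemma walkPos_append_of_le (s₁ : Fin n → Fin d × Bool) (s₂ : Fin m → Fin d × Bool)
    (k : Fin (n + m + 1)) (hk : (k : ℕ) ≤ n) :
    walkPos (Fin.append s₁ s₂) k = walkPos s₁ ⟨k, by lia⟩ := by
  simp only [walkPos, Finset.sum_filter, Fin.sum_univ_add, Fin.append_left, Fin.append_right,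
    Fin.val_castAdd, Fin.val_natAdd, add_eq_left]
  exact Finset.sum_eq_zero fun i _ => if_neg (by lia)

lemma walkPos_append_of_ge (s₁ : Fin n → Fin d × Bool) (s₂ : Fin m → Fin d × Bool)
    (k : Fin (n + m + 1)) (hk : n ≤ (k : ℕ)) :
    walkPos (Fin.append s₁ s₂) k =
      walkPos s₁ (Fin.last n) + walkPos s₂ ⟨k - n, by lia⟩ := by
  simp only [walkPos, Finset.sum_filter, Fin.sum_univ_add, Fin.append_left, Fin.append_right,
    Fin.val_castAdd, Fin.val_natAdd, Fin.val_last]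
  congr 1 <;> refine Finset.sum_congr rfl fun i _ => if_congr ?_ rfl rfl <;> lia

lemma walkPos_mem_walkRange (s : Fin n → Fin d × Bool) (k : Fin (n + 1)) :
    walkPos s k ∈ walkRange s :=
  Finset.mem_image_of_mem _ (Finset.mem_univ k)

lemma card_walkRange_le (s : Fin n → Fin d × Bool) : (walkRange s).card ≤ n + 1 := by
  simpa [walkRange] using Finset.card_image_le (s := Finset.univ) (f := walkPos s)

lemma card_walkRange_eq_iff (s : Fin n → Fin d × Bool) :
    (walkRange s).card = n + 1 ↔ SelfAvoiding s := by
  simpa [walkRange, SelfAvoiding] using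
    Finset.card_image_iff (s := Finset.univ) (f := walkPos s)

/-- The number of times at which the walk is at a vertex it has visited before. -/
def returnCount (s : Fin n → Fin d × Bool) : ℕ := n + 1 - (walkRange s).card

lemma returnCount_add_card_walkRange (s : Fin n → Fin d × Bool) :
    returnCount s + (walkRange s).card = n + 1 :=
  Nat.sub_add_cancel (card_walkRange_le s)

lemma returnCount_eq_zero_iff (s : Fin n → Fin d × Bool) :
    returnCount s = 0 ↔ SelfAvoiding s := by
  rw [← card_walkRange_eq_iff, ← returnCount_add_card_walkRange s, right_eq_add]

lemma walkRange_append_subset (s₁ : Fin n → Fin d × Bool) (s₂ : Fin m → Fin d × Bool) :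
    walkRange (Fin.append s₁ s₂) ⊆
      walkRange s₁ ∪ (walkRange s₂).image (walkPos s₁ (Fin.last n) + ·) := by
  refine Finset.image_subset_iff.2 fun k _ => ?_
  rcases le_total (k : ℕ) n with hk | hk
  · rw [walkPos_append_of_le s₁ s₂ k hk]
    exact Finset.mem_union_left _ (walkPos_mem_walkRange _ _)
  · rw [walkPos_append_of_ge s₁ s₂ k hk]
    exact Finset.mem_union_right _ (Finset.mem_image_of_mem _ (walkPos_mem_walkRange _ _))

-- Both pieces visit the junction, so it is counted only once in the range of the concatenation.
lemma card_walkRange_append_lt (s₁ : Fin n → Fin d × Bool) (s₂ : Fin m → Fin d × Bool) :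
    (walkRange (Fin.append s₁ s₂)).card < (walkRange s₁).card + (walkRange s₂).card := by
  set a := walkPos s₁ (Fin.last n)
  have hjunction : a ∈ walkRange s₁ ∩ (walkRange s₂).image (a + ·) :=
    Finset.mem_inter.2 ⟨walkPos_mem_walkRange s₁ _, Finset.mem_image.2
      ⟨walkPos s₂ 0, walkPos_mem_walkRange _ _, by rw [walkPos_zero, add_zero]⟩⟩
  calc (walkRange (Fin.append s₁ s₂)).card
      ≤ (walkRange s₁ ∪ (walkRange s₂).image (a + ·)).card :=
        Finset.card_le_card (walkRange_append_subset s₁ s₂)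
    _ < (walkRange s₁ ∪ (walkRange s₂).image (a + ·)).card +
          (walkRange s₁ ∩ (walkRange s₂).image (a + ·)).card :=
        Nat.lt_add_of_pos_right (Finset.card_pos.2 ⟨a, hjunction⟩)
    _ = (walkRange s₁).card + ((walkRange s₂).image (a + ·)).card :=
        Finset.card_union_add_card_inter _ _
    _ ≤ (walkRange s₁).card + (walkRange s₂).card :=
        Nat.add_le_add_left Finset.card_image_le _

lemma returnCount_add_le_returnCount_append (s₁ : Fin n → Fin d × Bool)
    (s₂ : Fin m → Fin d × Bool) :
    returnCount s₁ + returnCount s₂ ≤ returnCount (Fin.append s₁ s₂) := by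
  have := card_walkRange_append_lt s₁ s₂
  have := returnCount_add_card_walkRange s₁
  have := returnCount_add_card_walkRange s₂
  have := returnCount_add_card_walkRange (Fin.append s₁ s₂)
  lia

lemma one_le_visits {s : Fin n → Fin d × Bool} {v : Fin d → ℤ} (hv : v ∈ walkRange s) :
    1 ≤ visits s v := by
  obtain ⟨k, -, rfl⟩ := Finset.mem_image.1 hv
  exact Finset.card_pos.2 ⟨k, by simp⟩

lemma sum_visits_sub_one (s : Fin n → Fin d × Bool) :
    ∑ v ∈ walkRange s, (visits s v - 1) = returnCount s := by
  have hsum : ∑ v ∈ walkRange s, visits s v = n + 1 := by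
    simpa [visits, walkRange] using
      (Finset.card_eq_sum_card_image (walkPos s) Finset.univ).symm
  rw [Finset.sum_tsub_distrib _ fun v hv => one_le_visits hv, hsum, ← Finset.card_eq_sum_ones,
    returnCount]

lemma selfAvoiding_iff_visits_eq_one (s : Fin n → Fin d × Bool) :
    SelfAvoiding s ↔ ∀ v ∈ walkRange s, visits s v = 1 := by
  rw [← returnCount_eq_zero_iff, ← sum_visits_sub_one, Finset.sum_eq_zero_iff]
  refine forall₂_congr fun v hv => ?_
  have := one_le_visits hv
  lia

end Returns

section Penalized

/-! ### Walks with penalised returns -/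

/-- The partition function of `n`-step walks in which every return to a visited vertex is penalised
by a factor `ε`; it counts the self-avoiding walks when `ε = 0`, and all walks when `ε = 1`. -/
noncomputable def penalizedCount (d n : ℕ) (ε : ℝ) : ℝ :=
  ∑ s : Fin n → Fin d × Bool, ε ^ returnCount s

lemma penalizedCount_nonneg (d n : ℕ) {ε : ℝ} (hε : 0 ≤ ε) : 0 ≤ penalizedCount d n ε :=
  Finset.sum_nonneg fun _ _ => pow_nonneg hε _

lemma penalizedCount_zero (d n : ℕ) : penalizedCount d n 0 = csaw d n := by
  simp [penalizedCount, csaw, zero_pow_eq, returnCount_eq_zero_iff]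

lemma continuous_penalizedCount (d n : ℕ) : Continuous (penalizedCount d n) := by
  unfold penalizedCount
  fun_prop

lemma penalizedCount_add_le (d n m : ℕ) {ε : ℝ} (hε : 0 ≤ ε) (hε1 : ε ≤ 1) :
    penalizedCount d (n + m) ε ≤ penalizedCount d n ε * penalizedCount d m ε := by
  rw [penalizedCount, penalizedCount, penalizedCount, Finset.sum_mul_sum, ← Finset.sum_product',
    Finset.univ_product_univ, ← (Fin.appendEquiv n m).sum_comp]
  refine Finset.sum_le_sum fun s _ => ?_
  rw [← pow_add]
  exact pow_le_pow_of_le_one hε hε1 (returnCount_add_le_returnCount_append s.1 s.2)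

lemma summable_of_add_le_mul {a : ℕ → ℝ} (h0 : ∀ n, 0 ≤ a n) {N : ℕ} (hN : a N < 1)
    (ha : ∀ m, a (N + m) ≤ a N * a m) : Summable a := by
  refine summable_of_sum_range_le (c := (∑ i ∈ Finset.range N, a i) / (1 - a N)) h0 fun m => ?_
  rw [le_div_iff₀ (sub_pos.2 hN)]
  have hrenewal : ∑ i ∈ Finset.range m, a i ≤
      ∑ i ∈ Finset.range N, a i + a N * ∑ i ∈ Finset.range m, a i :=
    calc ∑ i ∈ Finset.range m, a i ≤ ∑ i ∈ Finset.range (N + m), a i :=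
          Finset.sum_le_sum_of_subset_of_nonneg (Finset.range_subset_range.2 (by lia))
            fun i _ _ => h0 i
      _ = ∑ i ∈ Finset.range N, a i + ∑ i ∈ Finset.range m, a (N + i) :=
          Finset.sum_range_add _ _ _
      _ ≤ ∑ i ∈ Finset.range N, a i + a N * ∑ i ∈ Finset.range m, a i := by
          rw [Finset.mul_sum]
          gcongr
          exact ha _
  linarith

lemma exists_summable_penalizedCount {d N : ℕ} {z : ℝ} (hz0 : 0 ≤ z)
    (hN : (csaw d N : ℝ) * z ^ N < 1) :
    ∃ y > z, ∃ ε > 0, Summable fun n => penalizedCount d n ε * y ^ n := by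
  have hcont : Continuous fun ε : ℝ => penalizedCount d N ε * (z + ε) ^ N :=
    (continuous_penalizedCount d N).mul (by fun_prop)
  have hlim : Tendsto (fun ε : ℝ => penalizedCount d N ε * (z + ε) ^ N) (𝓝[>] 0)
      (𝓝 (csaw d N * z ^ N)) :=
    (hcont.tendsto' 0 _ (by rw [penalizedCount_zero, add_zero])).mono_left nhdsWithin_le_nhds
  obtain ⟨ε, hε, hε0, hε1⟩ :=
    ((hlim.eventually_lt_const hN).and (Ioo_mem_nhdsGT one_pos)).exists
  refine ⟨z + ε, lt_add_of_pos_right z hε0, ε, hε0, summable_of_add_le_mul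
    (fun n => mul_nonneg (penalizedCount_nonneg d n hε0.le) (by positivity)) hε fun m => ?_⟩
  calc penalizedCount d (N + m) ε * (z + ε) ^ (N + m)
      ≤ penalizedCount d N ε * penalizedCount d m ε * (z + ε) ^ (N + m) := by
        gcongr
        exact penalizedCount_add_le d N m hε0.le hε1.le
    _ = penalizedCount d N ε * (z + ε) ^ N * (penalizedCount d m ε * (z + ε) ^ m) := by ring

lemma exists_csaw_mul_pow_lt_one {d : ℕ} {μ z : ℝ}
    (hμ : Tendsto (fun n : ℕ => (csaw d n : ℝ) ^ ((n : ℝ)⁻¹)) atTop (𝓝 μ))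
    (hz0 : 0 ≤ z) (hz : z < μ⁻¹) : ∃ N, (csaw d N : ℝ) * z ^ N < 1 := by
  have hμz : μ * z < 1 := (lt_inv_mul_iff₀ (inv_pos.1 (hz0.trans_lt hz))).1 (by rwa [mul_one])
  obtain ⟨N, hN, hN0⟩ :=
    (((hμ.mul_const z).eventually_lt_const hμz).and (eventually_ne_atTop 0)).exists
  refine ⟨N, ?_⟩
  calc (csaw d N : ℝ) * z ^ N = ((csaw d N : ℝ) ^ ((N : ℝ)⁻¹) * z) ^ N := by
        rw [mul_pow, Real.rpow_inv_natCast_pow (by positivity) hN0]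
    _ < 1 := pow_lt_one₀ (by positivity) hN hN0

end Penalized

section WalkWeights

/-! ### The weights of `n`-step walks -/

variable {d n : ℕ}

lemma prod_F_le (s : Fin n → Fin d × Bool) {g ρ A ε : ℝ}
    (hF : ∀ m, F g ρ m ≤ A * (A * ε) ^ (m - 1)) :
    ∏ v ∈ walkRange s, F g ρ (visits s v) ≤ A ^ (n + 1) * ε ^ returnCount s :=
  calc ∏ v ∈ walkRange s, F g ρ (visits s v)
      ≤ ∏ v ∈ walkRange s, A * (A * ε) ^ (visits s v - 1) :=
        Finset.prod_le_prod (fun v _ => F_nonneg _ _ _) fun v _ => hF _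
    _ = A ^ (walkRange s).card * (A * ε) ^ returnCount s := by
        rw [Finset.prod_mul_distrib, Finset.prod_const, Finset.prod_pow_eq_pow_sum,
          sum_visits_sub_one]
    _ = A ^ (n + 1) * ε ^ returnCount s := by
        rw [← returnCount_add_card_walkRange s]
        ring

lemma stepWeight_nonneg (d : ℕ) {δ : ℝ} (hδ : δ ≤ 1) : 0 ≤ (1 - δ) / (2 * d) :=
  div_nonneg (sub_nonneg.2 hδ) (by positivity)

lemma wAt_nonneg {δ : ℝ} (hδ : δ ≤ 1) (g ρ : ℝ) (x : Fin d → ℤ) : 0 ≤ wAt d δ n g ρ x :=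
  mul_nonneg (pow_nonneg (stepWeight_nonneg d hδ) n) (Finset.sum_nonneg fun _ _ =>
    Finset.prod_nonneg fun _ _ => F_nonneg _ _ _)

lemma wAt_le {δ g ρ A ε : ℝ} (hδ : δ ≤ 1) (hA : 0 ≤ A) (hε : 0 ≤ ε) (x : Fin d → ℤ)
    (hF : ∀ m, F g ρ m ≤ A * (A * ε) ^ (m - 1)) :
    wAt d δ n g ρ x ≤ A * (penalizedCount d n ε * ((1 - δ) / (2 * d) * A) ^ n) := by
  have := stepWeight_nonneg d hδ
  calc wAt d δ n g ρ x
      ≤ ((1 - δ) / (2 * d)) ^ n * ∑ s : Fin n → Fin d × Bool with walkPos s (Fin.last n) = x,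
          A ^ (n + 1) * ε ^ returnCount s := by
        unfold wAt
        gcongr with s
        exact prod_F_le s hF
    _ ≤ ((1 - δ) / (2 * d)) ^ n *
          ∑ s : Fin n → Fin d × Bool, A ^ (n + 1) * ε ^ returnCount s := by
        gcongr
        exact Finset.filter_subset _ _
    _ = A * (penalizedCount d n ε * ((1 - δ) / (2 * d) * A) ^ n) := by
        rw [← Finset.mul_sum, ← penalizedCount, mul_pow, pow_succ]
        ring

variable {ι : Type*} {l : Filter ι} {g ρ : ι → ℝ} {L : ℝ}

lemma tendsto_prod_F (s : Fin n → Fin d × Bool)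
    (hone : Tendsto (fun i => F (g i) (ρ i) 1) l (𝓝 L))
    (htwo : ∀ m, 2 ≤ m → Tendsto (fun i => F (g i) (ρ i) m) l (𝓝 0)) :
    Tendsto (fun i => ∏ v ∈ walkRange s, F (g i) (ρ i) (visits s v)) l
      (𝓝 (if SelfAvoiding s then L ^ (n + 1) else 0)) := by
  have hlim : Tendsto (fun i => ∏ v ∈ walkRange s, F (g i) (ρ i) (visits s v)) l
      (𝓝 (∏ v ∈ walkRange s, if visits s v = 1 then L else 0)) := by
    refine tendsto_finsetProd _ fun v hv => ?_
    split_ifs with h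
    · rwa [h]
    · exact htwo _ (Nat.lt_of_le_of_ne (one_le_visits hv) (Ne.symm h))
  simp only [Finset.prod_ite_zero, Finset.prod_const, ← selfAvoiding_iff_visits_eq_one] at hlim
  convert hlim using 3 with hs
  rw [(card_walkRange_eq_iff s).2 hs]

lemma tendsto_wAt (δ : ℝ) (x : Fin d → ℤ)
    (hone : Tendsto (fun i => F (g i) (ρ i) 1) l (𝓝 L))
    (htwo : ∀ m, 2 ≤ m → Tendsto (fun i => F (g i) (ρ i) m) l (𝓝 0)) :
    Tendsto (fun i => wAt d δ n (g i) (ρ i) x) l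
      (𝓝 (L * (csawAt d n x * ((1 - δ) / (2 * d) * L) ^ n))) := by
  have hlim := (tendsto_finsetSum
    (Finset.univ.filter fun s : Fin n → Fin d × Bool => walkPos s (Fin.last n) = x)
    fun s _ => tendsto_prod_F s hone htwo).const_mul (((1 - δ) / (2 * d)) ^ n)
  have hcount : ∑ s : Fin n → Fin d × Bool with walkPos s (Fin.last n) = x,
      (if SelfAvoiding s then L ^ (n + 1) else 0) = csawAt d n x * L ^ (n + 1) := by
    simp only [← Finset.sum_filter, Finset.filter_filter, Finset.sum_const, nsmul_eq_mul, csawAt,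
      and_comm]
  refine hlim.trans_eq (congrArg 𝓝 ?_)
  rw [hcount, mul_pow]
  ring

end WalkWeights

theorem two_point_function_limit_general {d : ℕ} (hd : 1 ≤ d) {δ : ℝ} (hδ : δ < 1)
    {z : ℝ} (hz0 : 0 ≤ z) (hz : ∃ N, (csaw d N : ℝ) * z ^ N < 1) (x : Fin d → ℤ)
    {p : ℝ} (hp : p = z * (2 * d) / ((1 - δ) * √Real.pi))
    {ι : Type*} {l : Filter ι} {g ρ : ι → ℝ} (hg : Tendsto g l atTop)
    (hlim : Tendsto (fun i => gaussFactor (g i) (ρ i)) l (𝓝 p))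
    (hα : 0 < p → Tendsto (fun i => alpha (g i) (ρ i)) l atTop) :
    Tendsto (fun i => ∑' n : ℕ, wAt d δ n (g i) (ρ i) x) l
      (𝓝 (p * √Real.pi * ∑' n : ℕ, (csawAt d n x : ℝ) * z ^ n)) := by
  have hδ' : 0 < 1 - δ := sub_pos.2 hδ
  set β : ℝ := (1 - δ) / (2 * d) with hβ
  have hβ0 : 0 < β := by positivity
  have hp0 : 0 ≤ p := by rw [hp]; positivity
  have hβp : β * (p * √Real.pi) = z := by
    rw [hβ, hp]
    field_simp
  obtain ⟨N, hN⟩ := hz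
  obtain ⟨y, hzy, ε, hε, hsum⟩ := exists_summable_penalizedCount hz0 hN
  have hA : p * √Real.pi < y / β := by rwa [lt_div_iff₀' hβ0, hβp]
  have hA0 : 0 < y / β := div_pos (hz0.trans_lt hzy) hβ0
  have hterm (n : ℕ) := tendsto_wAt (n := n) δ x (tendsto_F_one hg hlim hp0 hα)
    fun m hm => tendsto_F_of_two_le hg hlim hm
  have hdom : ∀ᶠ i in l, ∀ n,
      ‖wAt d δ n (g i) (ρ i) x‖ ≤ y / β * (penalizedCount d n ε * y ^ n) := by
    filter_upwards [eventually_F_le hg hlim hA (mul_pos hA0 hε)] with i hi n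
    rw [Real.norm_of_nonneg (wAt_nonneg hδ.le _ _ _)]
    simpa only [← hβ, mul_div_cancel₀ y hβ0.ne'] using wAt_le hδ.le hA0.le hε.le x hi
  simpa only [← hβ, hβp, tsum_mul_left] using
    tendsto_tsum_of_dominated_convergence (hsum.mul_left (y / β)) hterm hdom

/-- for `z ∈ [0, μ⁻¹)` and `p = z·2d/((1-δ)√π)`, under the scaling
`g^{-1/2} e^{α(g,ρ(g))²} → p` (with `α(g,ρ(g)) → ∞` if `p > 0`), the
continuous-time weakly self-avoiding walk two-point function
`Σ_n w_n(g,ρ(g);x)` converges to `p √π G_z(x)` as `g → ∞`. -/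
theorem two_point_function_limit (d : ℕ) (hd : 1 ≤ d) (δ : ℝ)
    (hδ : δ ∈ Set.Ioo (0 : ℝ) 1) (muSAW : ℝ)
    (hmuSAW : Tendsto (fun n : ℕ => ((csaw d n : ℝ)) ^ ((n : ℝ)⁻¹)) atTop (𝓝 muSAW))
    (z : ℝ) (hz0 : 0 ≤ z) (hz : z < muSAW⁻¹) (x : Fin d → ℤ)
    (p : ℝ) (hp : p = z * (2 * d) / ((1 - δ) * Real.sqrt Real.pi))
    (ρ : ℝ → ℝ)
    (hlim : Tendsto (fun g : ℝ =>
        g ^ (-(1 : ℝ) / 2) * Real.exp (((ρ g - 1) / (2 * Real.sqrt g)) ^ 2)) atTop (𝓝 p))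
    (hα : 0 < p → Tendsto (fun g : ℝ => (ρ g - 1) / (2 * Real.sqrt g)) atTop atTop) :
    Tendsto (fun g : ℝ => ∑' n : ℕ, wAt d δ n g (ρ g) x) atTop
      (𝓝 (p * Real.sqrt Real.pi * ∑' n : ℕ, (csawAt d n x : ℝ) * z ^ n)) :=
  two_point_function_limit_general hd hδ.2 hz0 (exists_csaw_mul_pow_lt_one hmuSAW hz0 hz) x hp
    tendsto_id hlim hα

end StrongInteraction
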